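/- Let g : V → (−∞,+∞] be a weakly lower semicontinuous function on a separable real Hilbert space V, not identically +∞, such that its biconjugate g** is proper and coercive (all sublevel sets of g** are bounded). Then for every x ∈ V, at least one of the following holds: (i) g(x) = g**(x); (ii) there exist a unit vector ν ∈ V, real numbers a, b, and t₀ > 0 such that g**(x + tν) = a·t + b for all t ∈ (−t₀,t₀), i.e., t ↦ g**(x + tν) is affine on (−t₀,t₀). -/

import Mathlib

open scoped InnerProductSpace RealInnerProductSpace ENNReal Topology
open Filter

noncomputable section

/-- The Legendre transform (Fenchel conjugate) of an extended-real-valued function. -/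
def legendre {V : Type*} [NormedAddCommGroup V] [InnerProductSpace ℝ V]
    (g : V → EReal) (y : V) : EReal :=
  ⨆ x : V, (((⟪x, y⟫_ℝ : ℝ) : EReal) - g x)

/-! If `(x, g** x)` is not an extreme point of the epigraph of `g**`, a segment of the epigraph is
centred at it, and convexity forces `g**` to be affine along that segment. If it is extreme, then
coercivity makes the truncated epigraphs weakly compact, and Choquet's lemma gives slices of the
epigraph by half-spaces inside any neighbourhood of the point. Were `g x > g** x`, weak lower
semicontinuity would provide a neighbourhood, hence a slice, missing the epigraph of `g` and
bounded above; the hyperplane cutting off that slice is then the graph of an affine minorant of `g`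
exceeding `g**` at `x`, which is impossible. -/

section Slices

variable {E : Type*} [AddCommGroup E] [Module ℝ E] [TopologicalSpace E]
  [IsTopologicalAddGroup E] [ContinuousSMul ℝ E]

theorem isCompact_convexJoin {s t : Set E} (hs : IsCompact s) (ht : IsCompact t) :
    IsCompact (convexJoin ℝ s t) := by
  have himage : convexJoin ℝ s t =
      (fun q : (E × E) × ℝ => (1 - q.2) • q.1.1 + q.2 • q.1.2) ''
        ((s ×ˢ t) ×ˢ Set.Icc (0 : ℝ) 1) := by
    ext z
    simp only [mem_convexJoin, segment_eq_image, Set.mem_image, Set.mem_prod, Prod.exists]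
    constructor
    · rintro ⟨a, ha, b, hb, θ, hθ, rfl⟩
      exact ⟨a, b, θ, ⟨⟨ha, hb⟩, hθ⟩, rfl⟩
    · rintro ⟨a, b, θ, ⟨⟨ha, hb⟩, hθ⟩, rfl⟩
      exact ⟨a, ha, b, hb, θ, hθ, rfl⟩
  rw [himage]
  exact ((hs.prod ht).prod isCompact_Icc).image (by fun_prop)

theorem isCompact_convexHull_union {s t : Set E} (hs : IsCompact (convexHull ℝ s))
    (ht : IsCompact (convexHull ℝ t)) : IsCompact (convexHull ℝ (s ∪ t)) := by
  rcases s.eq_empty_or_nonempty with rfl | hs₀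
  · rwa [Set.empty_union]
  rcases t.eq_empty_or_nonempty with rfl | ht₀
  · rwa [Set.union_empty]
  rw [convexHull_union hs₀ ht₀]
  exact isCompact_convexJoin hs ht

theorem isCompact_convexHull_biUnion_finset {ι : Type*} (I : Finset ι) {K : ι → Set E}
    (hK : ∀ i ∈ I, IsCompact (convexHull ℝ (K i))) :
    IsCompact (convexHull ℝ (⋃ i ∈ I, K i)) := by
  classical
  induction I using Finset.induction_on with
  | empty => simp
  | insert j I _ ih =>
    rw [Finset.forall_mem_insert] at hK
    rw [Finset.set_biUnion_insert]
    exact isCompact_convexHull_union hK.1 (ih hK.2)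

variable [T2Space E] [LocallyConvexSpace ℝ E] {C : Set E} {z : E}

theorem exists_isCompact_convex_mem_nhdsWithin_notMem (hC : IsCompact C) (hconv : Convex ℝ C)
    {w : E} (hwz : w ≠ z) :
    ∃ K ⊆ C \ {z}, IsCompact K ∧ Convex ℝ K ∧ K ∈ 𝓝[C] w := by
  obtain ⟨F, hF⟩ := geometric_hahn_banach_point_point hwz.symm
  obtain ⟨u, hzu, huw⟩ := exists_between hF
  refine ⟨C ∩ {v | u ≤ F v}, fun v hv => ⟨hv.1, ?_⟩,
    hC.inter_right (isClosed_le continuous_const F.continuous),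
    hconv.inter (convex_halfSpace_ge F.isLinear u), ?_⟩
  · rintro rfl
    exact hzu.not_ge hv.2
  · exact inter_mem self_mem_nhdsWithin <| mem_nhdsWithin_of_mem_nhds <|
      F.continuous.continuousAt.eventually_const_le huw

/-- **Choquet's lemma**. The idea is that `C \ U` is covered by finitely many compact convex
subsets of the convex set `C \ {z}`, whose convex hull is a compact convex set avoiding `z`. -/
theorem exists_slice_subset_of_isCompact (hC : IsCompact C) (hconv : Convex ℝ C)
    (hz : z ∈ C.extremePoints ℝ) {U : Set E} (hU : U ∈ 𝓝 z) :
    ∃ (F : StrongDual ℝ E) (u : ℝ), F z < u ∧ C ∩ {w | F w < u} ⊆ U := by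
  have hne : ∀ w ∈ C \ interior U, w ≠ z := by
    rintro w hw rfl
    exact hw.2 (mem_interior_iff_mem_nhds.2 hU)
  choose! K hKsub hKcomp hKconv hKnhds using fun w hw =>
    exists_isCompact_convex_mem_nhdsWithin_notMem hC hconv (hne w hw)
  obtain ⟨I, hI, hcover⟩ := (hC.diff isOpen_interior).elim_nhdsWithin_subcover K fun w hw =>
    nhdsWithin_mono w Set.sdiff_subset (hKnhds w hw)
  set H := convexHull ℝ (⋃ i ∈ I, K i)
  have hHcomp : IsCompact H := isCompact_convexHull_biUnion_finset I fun i hi => by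
    rw [(hKconv i (hI i hi)).convexHull_eq]
    exact hKcomp i (hI i hi)
  have hHsub : H ⊆ C \ {z} := convexHull_min (Set.iUnion₂_subset fun i hi => hKsub i (hI i hi))
    (hconv.mem_extremePoints_iff_convex_sdiff.1 hz).2
  obtain ⟨F, u, hzu, hF⟩ := geometric_hahn_banach_point_closed (convex_convexHull ℝ _)
    hHcomp.isClosed fun hzH => (hHsub hzH).2 rfl
  refine ⟨F, u, hzu, fun w ⟨hwC, hwu⟩ => by_contra fun hwU => ?_⟩
  have hwH : w ∈ H := subset_convexHull ℝ _ (hcover ⟨hwC, fun hw => hwU (interior_subset hw)⟩)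
  exact lt_asymm hwu (hF w hwH)

/-- A slice of `C` is connected, so it cannot leave the neighbourhood `N` once its intersection
with `N` lies in the interior of `N`. -/
theorem exists_slice_subset_of_isCompact_inter (hconv : Convex ℝ C)
    (hz : z ∈ C.extremePoints ℝ) {N : Set E} (hN : N ∈ 𝓝 z) (hNclosed : IsClosed N)
    (hNconv : Convex ℝ N) (hCN : IsCompact (C ∩ N)) {U : Set E} (hU : U ∈ 𝓝 z) :
    ∃ (F : StrongDual ℝ E) (u : ℝ), F z < u ∧ C ∩ {w | F w < u} ⊆ U := by
  have hzCN : z ∈ (C ∩ N).extremePoints ℝ :=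
    inter_extremePoints_subset_extremePoints_of_subset Set.inter_subset_left
      ⟨⟨hz.1, mem_of_mem_nhds hN⟩, hz⟩
  obtain ⟨F, u, hzu, hF⟩ := exists_slice_subset_of_isCompact hCN (hconv.inter hNconv) hzCN
    (inter_mem hU (interior_mem_nhds.2 hN))
  have hslice_inter : C ∩ {w | F w < u} ∩ N ⊆ U ∩ interior N :=
    fun w hw => hF ⟨⟨hw.1.1, hw.2⟩, hw.1.2⟩
  have hslice_conv : Convex ℝ (C ∩ {w | F w < u}) :=
    hconv.inter (convex_halfSpace_lt F.isLinear u)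
  have hslice_sub : C ∩ {w | F w < u} ⊆ interior N :=
    hslice_conv.isPreconnected.subset_of_closure_inter_subset isOpen_interior
      ⟨z, ⟨hz.1, hzu⟩, mem_interior_iff_mem_nhds.2 hN⟩
      fun w hw => (hslice_inter ⟨hw.2, hNclosed.closure_interior_subset hw.1⟩).2
  exact ⟨F, u, hzu, fun w hw => (hslice_inter ⟨hw, interior_subset (hslice_sub hw)⟩).1⟩

end Slices

/-- The epigraph of an extended-real-valued function, as a subset of the product of its domain
with the real line. -/
def epigraph {E : Type*} (f : E → EReal) : Set (E × ℝ) :=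
  {z | f z.1 ≤ (z.2 : EReal)}

section EpigraphConvex

variable {E : Type*} [AddCommGroup E] [Module ℝ E]

theorem exists_ne_zero_add_mem_sub_mem {C : Set E} {z : E} (hz : z ∈ C) (hC : Convex ℝ C)
    (hext : z ∉ C.extremePoints ℝ) : ∃ v ≠ 0, z + v ∈ C ∧ z - v ∈ C := by
  obtain ⟨y₁, h₁, y₂, h₂, ⟨a, b, ha, hb, hab, rfl⟩, hne⟩ :
      ∃ y₁ ∈ C, ∃ y₂ ∈ C, z ∈ openSegment ℝ y₁ y₂ ∧ y₁ ≠ z := by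
    by_contra! hseg
    exact hext (mem_extremePoints_iff_left.2 ⟨hz, hseg⟩)
  have hy : y₂ - y₁ ≠ 0 := by
    rintro hy
    rw [sub_eq_zero] at hy
    exact hne (by rw [hy, ← add_smul, hab, one_smul])
  have hmin : 0 < min a b := lt_min ha hb
  have hmem : ∀ t, t ≤ a → -t ≤ b → (a • y₁ + b • y₂) + t • (y₂ - y₁) ∈ C := fun t hta htb => by
    convert hC h₁ h₂ (a := a - t) (b := b + t) (by linarith) (by linarith) (by linarith) using 1
    module
  refine ⟨min a b • (y₂ - y₁), smul_ne_zero hmin.ne' hy, hmem _ (min_le_left a b) (by linarith), ?_⟩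
  rw [sub_eq_add_neg, ← neg_smul]
  exact hmem _ (by linarith) (by linarith [min_le_right a b])

theorem add_smul_mem_of_add_mem_of_sub_mem {C : Set E} (hC : Convex ℝ C) {z v : E}
    (hadd : z + v ∈ C) (hsub : z - v ∈ C) {t : ℝ} (ht : t ∈ Set.Icc (-1) 1) :
    z + t • v ∈ C := by
  have := hC hsub hadd (a := (1 - t) / 2) (b := (1 + t) / 2) (by linarith [ht.2])
    (by linarith [ht.1]) (by ring)
  convert this using 1
  module

variable {f : E → EReal} {x : E} {r : ℝ}

/-- The lower bound holds because `x` is the midpoint of `x + t • d` and `x - t • d`. -/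
theorem eq_add_mul_of_mem_epigraph (hf : Convex ℝ (epigraph f)) (hx : f x = r) {d : E} {σ : ℝ}
    (hadd : (x + d, r + σ) ∈ epigraph f) (hsub : (x - d, r - σ) ∈ epigraph f) {t : ℝ}
    (ht : t ∈ Set.Icc (-1) 1) : f (x + t • d) = ((r + t * σ : ℝ) : EReal) := by
  have hmem : ∀ t ∈ Set.Icc (-1 : ℝ) 1, (x + t • d, r + t * σ) ∈ epigraph f := fun t ht =>
    add_smul_mem_of_add_mem_of_sub_mem hf (z := (x, r)) (v := (d, σ)) hadd hsub ht
  refine (hmem t ht).antisymm (EReal.le_of_forall_lt_iff_le.1 fun s hs => ?_)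
  have hmid : f ((1 / 2 : ℝ) • (x + t • d) + (1 / 2 : ℝ) • (x + -t • d)) ≤
      ((1 / 2 * s + 1 / 2 * (r + -t * σ) : ℝ) : EReal) :=
    hf (show (x + t • d, s) ∈ epigraph f from hs.le)
      (hmem (-t) ⟨by linarith [ht.2], by linarith [ht.1]⟩) (by norm_num) (by norm_num) (by norm_num)
  rw [show (1 / 2 : ℝ) • (x + t • d) + (1 / 2 : ℝ) • (x + -t • d) = x by module, hx,
    EReal.coe_le_coe_iff] at hmid
  exact EReal.coe_le_coe_iff.2 (by linarith)

theorem exists_affine_of_notMem_extremePoints_epigraph (hf : Convex ℝ (epigraph f))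
    (hx : f x = r) (hext : (x, r) ∉ (epigraph f).extremePoints ℝ) :
    ∃ d ≠ 0, ∃ σ : ℝ, ∀ t ∈ Set.Icc (-1 : ℝ) 1, f (x + t • d) = ((r + t * σ : ℝ) : EReal) := by
  obtain ⟨⟨d, σ⟩, hv, hadd, hsub⟩ :=
    exists_ne_zero_add_mem_sub_mem (show (x, r) ∈ epigraph f from hx.le) hf hext
  have haff : ∀ t ∈ Set.Icc (-1 : ℝ) 1, f (x + t • d) = ((r + t * σ : ℝ) : EReal) :=
    fun t ht => eq_add_mul_of_mem_epigraph hf hx hadd hsub ht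
  refine ⟨d, ?_, σ, haff⟩
  rintro rfl
  have hσ := haff 1 (by norm_num)
  rw [smul_zero, add_zero, hx, EReal.coe_eq_coe_iff] at hσ
  exact hv (Prod.ext rfl (by simpa using hσ.symm))

end EpigraphConvex

section EpigraphTopology

variable {E : Type*} [TopologicalSpace E]

theorem exists_coe_le_of_isCompact {f : E → EReal} {K : Set E} (hf : LowerSemicontinuousOn f K)
    (hK : IsCompact K) (hbot : ∀ y ∈ K, f y ≠ ⊥) : ∃ m : ℝ, ∀ y ∈ K, (m : EReal) ≤ f y := by
  rcases K.eq_empty_or_nonempty with rfl | hne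
  · simp
  obtain ⟨y₀, hy₀, hmin⟩ := hf.exists_isMinOn hne hK
  obtain ⟨m, -, hm⟩ := EReal.exists_between_coe_real (bot_lt_iff_ne_bot.2 (hbot y₀ hy₀))
  exact ⟨m, fun y hy => hm.le.trans (hmin hy)⟩

theorem isCompact_epigraph_inter_of_isCompact_sublevel {f : E → EReal}
    (hf : LowerSemicontinuous f) (hbot : ∀ y, f y ≠ ⊥) {c : ℝ}
    (hc : IsCompact {y | f y ≤ (c : EReal)}) :
    IsCompact (epigraph f ∩ {z | z.2 ≤ c}) := by
  obtain ⟨m, hm⟩ := exists_coe_le_of_isCompact (hf.lowerSemicontinuousOn _) hc fun y _ => hbot y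
  have hclosed : IsClosed (epigraph f) :=
    hf.isClosed_epigraph.preimage (continuous_fst.prodMk
      (continuous_coe_real_ereal.comp continuous_snd))
  refine (hc.prod (isCompact_Icc (a := m) (b := c))).of_isClosed_subset
    (hclosed.inter (isClosed_le continuous_snd continuous_const)) ?_
  rintro ⟨y, s⟩ ⟨hys, hsc⟩
  have hyc : f y ≤ (c : EReal) := le_trans hys (EReal.coe_le_coe_iff.2 hsc)
  exact ⟨hyc, EReal.coe_le_coe_iff.1 ((hm y hyc).trans hys), hsc⟩

variable [AddCommGroup E] [Module ℝ E]

theorem exists_affine_le_iff_of_pos {F : StrongDual ℝ (E × ℝ)} (hF : 0 < F (0, 1)) (u : ℝ) :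
    ∃ (ℓ : StrongDual ℝ E) (α : ℝ), ∀ y t, u ≤ F (y, t) ↔ ℓ y + α ≤ t := by
  refine ⟨-((F (0, 1))⁻¹ • F.comp (.inl ℝ E ℝ)), (F (0, 1))⁻¹ * u, fun y t => ?_⟩
  have hsplit : F (y, t) = F (y, 0) + t * F (0, 1) := by
    rw [← smul_eq_mul, ← map_smul, ← map_add]
    simp
  have hval : (-((F (0, 1))⁻¹ • F.comp (.inl ℝ E ℝ))) y + (F (0, 1))⁻¹ * u =
      (u - F (y, 0)) / F (0, 1) := by
    simp only [neg_apply, smul_apply, ContinuousLinearMap.comp_apply,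
      ContinuousLinearMap.inl_apply, smul_eq_mul]
    ring
  rw [hval, div_le_iff₀ hF, hsplit, sub_le_iff_le_add']

variable [IsTopologicalAddGroup E] [ContinuousSMul ℝ E] [T2Space E] [LocallyConvexSpace ℝ E]

theorem le_of_mem_extremePoints_epigraph {f g : E → EReal} (hf : Convex ℝ (epigraph f))
    (hfg : ∀ y, f y ≤ g y) (hg : LowerSemicontinuous g) {x : E} {r c : ℝ}
    (hext : (x, r) ∈ (epigraph f).extremePoints ℝ) (hrc : r < c)
    (hcomp : IsCompact (epigraph f ∩ {z | z.2 ≤ c}))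
    (hmin : ∀ (ℓ : StrongDual ℝ E) (α : ℝ),
      (∀ y, ((ℓ y + α : ℝ) : EReal) ≤ g y) → ((ℓ x + α : ℝ) : EReal) ≤ f x) :
    g x ≤ r := by
  by_contra! hlt
  obtain ⟨s, hrs, hsg⟩ := EReal.exists_between_coe_real hlt
  rw [EReal.coe_lt_coe_iff] at hrs
  obtain ⟨F, u, hFx, hslice⟩ := exists_slice_subset_of_isCompact_inter hf hext
    (N := {z | z.2 ≤ c}) (U := {z | (s : EReal) < g z.1} ∩ {z | z.2 < s})
    (continuous_snd.continuousAt.eventually_le_const hrc)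
    (isClosed_le continuous_snd continuous_const)
    (convex_halfSpace_le (LinearMap.snd ℝ E ℝ).isLinear c) hcomp
    ((((hg.isOpen_preimage s).preimage continuous_fst).inter
      (isOpen_lt continuous_snd continuous_const)).mem_nhds ⟨hsg, hrs⟩)
  have hgu : ∀ (y : E) (t : ℝ), g y ≤ (t : EReal) → u ≤ F (y, t) := fun y t hyt => by
    by_contra! hFu
    obtain ⟨hsy, hts⟩ := hslice ⟨(hfg y).trans hyt, hFu⟩
    exact (hsy.trans_le hyt).not_gt (EReal.coe_lt_coe_iff.2 hts)
  have hxs : u ≤ F (x, s) := by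
    by_contra! hFu
    exact lt_irrefl s (hslice ⟨hext.1.trans (EReal.coe_le_coe_iff.2 hrs.le), hFu⟩).2
  have hF : 0 < F (0, 1) := by
    have hdiff : F (x, s) - F (x, r) = (s - r) * F (0, 1) := by
      rw [← map_sub, ← smul_eq_mul, ← map_smul]
      simp
    exact (mul_pos_iff_of_pos_left (sub_pos.2 hrs)).1 (by linarith)
  obtain ⟨ℓ, α, hℓ⟩ := exists_affine_le_iff_of_pos hF u
  have hminorant : ∀ y, ((ℓ y + α : ℝ) : EReal) ≤ g y := fun y =>
    EReal.le_of_forall_lt_iff_le.1 fun t ht => EReal.coe_le_coe_iff.2 ((hℓ y t).1 (hgu y t ht.le))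
  have hxr : ((ℓ x + α : ℝ) : EReal) ≤ r := (hmin ℓ α hminorant).trans hext.1
  exact hFx.not_ge ((hℓ x r).2 (EReal.coe_le_coe_iff.1 hxr))

end EpigraphTopology

section WeakTopology

variable (V : Type*) [NormedAddCommGroup V] [InnerProductSpace ℝ V] [CompleteSpace V]

theorem inclusionInDoubleDual_surjective :
    Function.Surjective (NormedSpace.inclusionInDoubleDual ℝ V) := by
  intro φ
  refine ⟨(InnerProductSpace.toDual ℝ V).symm
    (φ.comp (InnerProductSpace.toDual ℝ V).toContinuousLinearEquiv.toContinuousLinearMap), ?_⟩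
  ext ℓ
  rw [NormedSpace.dual_def, ← InnerProductSpace.toDual_symm_apply, real_inner_comm,
    InnerProductSpace.toDual_symm_apply]
  exact congrArg φ ((InnerProductSpace.toDual ℝ V).apply_symm_apply ℓ)

variable {V}

theorem isCompact_weakSpace_of_isBounded_of_isClosed {S : Set (WeakSpace ℝ V)}
    (hb : Bornology.IsBounded (toWeakSpace ℝ V ⁻¹' S)) (hc : IsClosed S) : IsCompact S := by
  rw [← hc.closure_eq]
  refine NormedSpace.isCompact_closure_of_isBounded ℝ V S hb fun φ _ => ?_
  exact inclusionInDoubleDual_surjective V φ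

end WeakTopology

section Legendre

variable {V : Type*} [NormedAddCommGroup V] [InnerProductSpace ℝ V]

theorem legendre_le_coe_iff (h : V → EReal) (y : V) (s : ℝ) :
    legendre h y ≤ s ↔ ∀ p, ((⟪p, y⟫_ℝ - s : ℝ) : EReal) ≤ h p := by
  rw [legendre, iSup_le_iff]
  refine forall_congr' fun p => ?_
  induction h p with
  | bot => simpa using EReal.coe_ne_bot (⟪p, y⟫_ℝ - s)
  | top => simp
  | coe r =>
    norm_cast
    constructor <;> intro <;> linarith

theorem inner_sub_le_legendre (h : V → EReal) (p y : V) :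
    ((⟪p, y⟫_ℝ : ℝ) : EReal) - h p ≤ legendre h y :=
  le_iSup (fun p : V => ((⟪p, y⟫_ℝ : ℝ) : EReal) - h p) p

theorem legendre_legendre_le (g : V → EReal) (y : V) : legendre (legendre g) y ≤ g y := by
  refine EReal.le_of_forall_lt_iff_le.1 fun s hs => (legendre_le_coe_iff _ _ _).2 fun p => ?_
  calc ((⟪p, y⟫_ℝ - s : ℝ) : EReal) = ((⟪y, p⟫_ℝ : ℝ) : EReal) - s := by
        rw [real_inner_comm, EReal.coe_sub]
    _ ≤ ((⟪y, p⟫_ℝ : ℝ) : EReal) - g y := EReal.sub_le_sub le_rfl hs.le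
    _ ≤ legendre g p := inner_sub_le_legendre g y p

theorem coe_le_legendre_legendre_of_affine_le [CompleteSpace V] {g : V → EReal}
    {ℓ : StrongDual ℝ V} {α : ℝ} (hℓ : ∀ y, ((ℓ y + α : ℝ) : EReal) ≤ g y) (x : V) :
    ((ℓ x + α : ℝ) : EReal) ≤ legendre (legendre g) x := by
  obtain ⟨p, rfl⟩ := (InnerProductSpace.toDual ℝ V).surjective ℓ
  simp only [InnerProductSpace.toDual_apply_apply] at hℓ ⊢
  have hconj : legendre g p ≤ ((-α : ℝ) : EReal) := by
    rw [legendre_le_coe_iff]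
    intro y
    simpa only [real_inner_comm, sub_neg_eq_add] using hℓ y
  calc ((⟪p, x⟫_ℝ + α : ℝ) : EReal) = ((⟪p, x⟫_ℝ : ℝ) : EReal) - ((-α : ℝ) : EReal) := by
        rw [← EReal.coe_sub, sub_neg_eq_add]
    _ ≤ ((⟪p, x⟫_ℝ : ℝ) : EReal) - legendre g p := EReal.sub_le_sub le_rfl hconj
    _ ≤ legendre (legendre g) x := inner_sub_le_legendre _ p x

theorem lowerSemicontinuous_legendre (h : V → EReal) :
    LowerSemicontinuous (α := WeakSpace ℝ V) (legendre h : V → EReal) := by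
  refine lowerSemicontinuous_iSup fun p => ?_
  have hinner : Continuous fun y : WeakSpace ℝ V => (⟪p, (y : V)⟫_ℝ : ℝ) :=
    WeakBilin.eval_continuous (topDualPairing ℝ V).flip (innerSL ℝ p)
  exact EReal.lowerSemicontinuous_add.comp
    ((continuous_coe_real_ereal.comp hinner).prodMk continuous_const)

theorem convex_epigraph_legendre (h : V → EReal) : Convex ℝ (epigraph (legendre h)) := by
  have heq : epigraph (legendre h) =
      ⋂ p : V, (fun z : V × ℝ => ⟪p, z.1⟫_ℝ - z.2) ⁻¹' {r : ℝ | (r : EReal) ≤ h p} := by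
    ext z
    simp only [Set.mem_iInter]
    exact legendre_le_coe_iff h z.1 z.2
  rw [heq]
  refine convex_iInter fun p => ?_
  have hconv : Convex ℝ {r : ℝ | (r : EReal) ≤ h p} :=
    (isLowerSet_Iic (h p)).preimage EReal.coe_strictMono.monotone |>.ordConnected.convex
  exact hconv.linear_preimage ((innerₛₗ ℝ p).comp (LinearMap.fst ℝ V ℝ) - LinearMap.snd ℝ V ℝ)

end Legendre

theorem exists_norm_eq_one_affine {V : Type*} [NormedAddCommGroup V] [NormedSpace ℝ V]
    {f : V → EReal} {x d : V} {r σ : ℝ} (hd : d ≠ 0)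
    (haff : ∀ t ∈ Set.Icc (-1 : ℝ) 1, f (x + t • d) = ((r + t * σ : ℝ) : EReal)) :
    ∃ (ν : V) (a b t₀ : ℝ), ‖ν‖ = 1 ∧ 0 < t₀ ∧
      ∀ t ∈ Set.Ioo (-t₀) t₀, f (x + t • ν) = ((a * t + b : ℝ) : EReal) := by
  have hd' : 0 < ‖d‖ := norm_pos_iff.2 hd
  refine ⟨‖d‖⁻¹ • d, σ / ‖d‖, r, ‖d‖, norm_smul_inv_norm (𝕜 := ℝ) hd, hd', fun t ht => ?_⟩
  have ht' : t * ‖d‖⁻¹ ∈ Set.Icc (-1 : ℝ) 1 := by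
    rw [← div_eq_mul_inv]
    exact ⟨by rw [le_div_iff₀ hd']; linarith [ht.1], by rw [div_le_iff₀ hd']; linarith [ht.2]⟩
  rw [smul_smul, haff _ ht']
  congr 1
  ring

theorem statement10_general {V : Type*} [NormedAddCommGroup V] [InnerProductSpace ℝ V]
    [CompleteSpace V] (g : V → EReal)
    (hwlsc : LowerSemicontinuous (α := WeakSpace ℝ V) g)
    (hss_nebot : ∀ x, legendre (legendre g) x ≠ ⊥)
    (hcoercive : ∀ r : ℝ, Bornology.IsBounded {x : V | legendre (legendre g) x ≤ (r : EReal)})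
    (x : V) :
    g x = legendre (legendre g) x ∨
      ∃ (ν : V) (a b t₀ : ℝ), ‖ν‖ = 1 ∧ 0 < t₀ ∧
        ∀ t ∈ Set.Ioo (-t₀) t₀,
          legendre (legendre g) (x + t • ν) = ((a * t + b : ℝ) : EReal) := by
  have hle := legendre_legendre_le g
  by_cases htop : legendre (legendre g) x = ⊤
  · exact .inl ((top_le_iff.1 (htop ▸ hle x)).trans htop.symm)
  obtain ⟨r, hr⟩ : ∃ r : ℝ, legendre (legendre g) x = r :=
    ⟨_, (EReal.coe_toReal htop (hss_nebot x)).symm⟩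
  by_cases hext : (x, r) ∈ (epigraph (legendre (legendre g))).extremePoints ℝ
  · have hlsc := lowerSemicontinuous_legendre (legendre g)
    have hcomp := isCompact_epigraph_inter_of_isCompact_sublevel hlsc hss_nebot
      (isCompact_weakSpace_of_isBounded_of_isClosed (hcoercive (r + 1))
        (hlsc.isClosed_preimage ((r + 1 : ℝ) : EReal)))
    have : LocallyConvexSpace ℝ (WeakSpace ℝ V) := WeakBilin.locallyConvexSpace
    have hgr : g x ≤ r := le_of_mem_extremePoints_epigraph (E := WeakSpace ℝ V)
      (convex_epigraph_legendre (V := V) _) hle hwlsc hext (lt_add_one r) hcomp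
      fun ℓ α hℓ => coe_le_legendre_legendre_of_affine_le (ℓ := ℓ.comp (toWeakSpaceCLM ℝ V)) hℓ x
    exact .inl ((hgr.trans hr.ge).antisymm (hle x))
  · obtain ⟨d, hd, σ, haff⟩ := exists_affine_of_notMem_extremePoints_epigraph
      (convex_epigraph_legendre _) hr hext
    exact .inr (exists_norm_eq_one_affine hd haff)

/-- Brøndsted-type theorem. Let `g` be weakly l.s.c., not identically `+∞`,
never `-∞`, with proper coercive biconjugate `g**`. Then for every `x`: either `g(x) = g**(x)`,
or there is a unit direction `ν` along which `g**` is affine near `x`. -/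
theorem statement10 {V : Type*} [NormedAddCommGroup V] [InnerProductSpace ℝ V]
    [CompleteSpace V] [TopologicalSpace.SeparableSpace V]
    (g : V → EReal)
    (hwlsc : LowerSemicontinuous (α := WeakSpace ℝ V) g)
    (hnebot : ∀ x, g x ≠ ⊥) (hproper : ∃ x, g x ≠ ⊤)
    (hss_nebot : ∀ x, legendre (legendre g) x ≠ ⊥)
    (hss_proper : ∃ x, legendre (legendre g) x ≠ ⊤)
    (hcoercive : ∀ r : ℝ, Bornology.IsBounded {x : V | legendre (legendre g) x ≤ (r : EReal)})
    (x : V) :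
    g x = legendre (legendre g) x ∨
      ∃ (ν : V) (a b t₀ : ℝ), ‖ν‖ = 1 ∧ 0 < t₀ ∧
        ∀ t ∈ Set.Ioo (-t₀) t₀,
          legendre (legendre g) (x + t • ν) = ((a * t + b : ℝ) : EReal) := by
  exact statement10_general g hwlsc hss_nebot hcoercive x
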